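/- The generating function T0(x) of crossing-free trees on points of a circle satisfies T0(x)³ − x·T0(x) + x² = 0, where T0(x) = Σ_n t_n x^n and t_n is the number of crossing-free trees on n labeled points on a circle. Moreover, if B(x) is the generating function of butterflies, then T0(x) = x/(1 − B(x)) and B(x) = T0(x)²/x. -/

import Mathlib

/-- Two chords `(p.1, p.2)` and `(q.1, q.2)` of a circle with vertices labeled
`0, 1, …, n-1` in circular order interleave, i.e. cross, when
`p.1 < q.1 < p.2 < q.2`. -/
def Interleaves {n : ℕ} (p q : Fin n × Fin n) : Prop :=
  p.1 < q.1 ∧ q.1 < p.2 ∧ p.2 < q.2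

instance {n : ℕ} (p q : Fin n × Fin n) : Decidable (Interleaves p q) :=
  inferInstanceAs (Decidable (_ ∧ _ ∧ _))

/-- The number of crossings of a set of chords (each chord recorded with its
endpoints in increasing order): the number of unordered pairs of chords whose
endpoints interleave around the circle. -/
def crossNum {n : ℕ} (D : Finset (Fin n × Fin n)) : ℕ :=
  ((D ×ˢ D).filter fun pq => Interleaves pq.1 pq.2).card

/-- A chord diagram: each chord recorded with its endpoints in increasing
order. -/
def IsDiagram {n : ℕ} (D : Finset (Fin n × Fin n)) : Prop :=
  ∀ p ∈ D, p.1 < p.2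

/-- The graph on the `n` points of the circle whose edges are the chords of the
diagram `D`. -/
def diagGraph {n : ℕ} (D : Finset (Fin n × Fin n)) : SimpleGraph (Fin n) :=
  SimpleGraph.fromRel (fun a b => (a, b) ∈ D)

/-- The generating function `T₀(x)` of crossing-free trees on points of a
circle, where `x` marks the number of vertices: `T₀(x) = Σₙ tₙ xⁿ` with `tₙ`
the number of sets of chords on `n` labeled points of a circle forming a tree
(a connected acyclic graph) with no two chords crossing. -/
noncomputable def treeGF0 : PowerSeries ℚ :=
  PowerSeries.mk fun n => (Nat.card {D : Finset (Fin n × Fin n) //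
    IsDiagram D ∧ crossNum D = 0 ∧ (diagGraph D).IsTree} : ℚ)

open PowerSeries

/-!
In a crossing-free tree with at least two points, no chord passes over the end `d` of the longest
chord at the first point `0`. So the tree is the wedge at `d` of a tree on `0, …, d` containing
the chord `(0, d)` and a tree on the remaining points and `d`; if `B` counts trees of the former
kind, with weight `x ^ d`, this gives `T₀ = x + B T₀`. Removing the chord `(0, d)` leaves two
components, which are intervals because nothing crosses, whence `x B = T₀ ^ 2`: contracting the
chord, rather than removing it, produces a butterfly. Eliminating `B` gives the cubic.
-/

section Saturated

variable {V : Type*} {I : Finset V} {D E : Finset (V × V)} {c : V}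

/-- `S` is a union of connected components of the graph with chord set `D`. Both connectedness and
acyclicity of diagrams are expressed through such sets, which makes them easy to cut and paste. -/
def IsSaturated (D : Finset (V × V)) (S : Set V) : Prop :=
  ∀ p ∈ D, p.1 ∈ S ↔ p.2 ∈ S

/-- The subdiagram `E` of `D`, with points in `I`, hangs on the rest of `D` at the point `c`: the
other chords of `D` meet `I` at most in `c`. -/
structure IsPendant (D : Finset (V × V)) (I : Finset V) (E : Finset (V × V)) (c : V) : Prop where
  subset : E ⊆ D
  subset_product : E ⊆ I ×ˢ I
  root_mem : c ∈ I
  eq_root : ∀ p ∈ D, p ∉ E → (p.1 ∈ I → p.1 = c) ∧ (p.2 ∈ I → p.2 = c)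

namespace IsPendant

/-- Contracting everything outside `I` to `c` pulls saturated sets of `E` back to `D`. -/
theorem exists_isSaturated_extension (h : IsPendant D I E c) {S : Set V} (hS : IsSaturated E S) :
    ∃ S', IsSaturated D S' ∧ ∀ x ∈ I, x ∈ S' ↔ x ∈ S := by
  classical
  refine ⟨{x | (if x ∈ I then x else c) ∈ S}, fun p hp => ?_, fun x hx => by simp [hx]⟩
  by_cases hpE : p ∈ E
  · have hpI := Finset.mem_product.1 (h.subset_product hpE)
    simpa [hpI] using hS p hpE
  · have hpc := h.eq_root p hp hpE
    grind

variable [DecidableEq V] {e : V × V}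

theorem erase (h : IsPendant D I E c) : IsPendant (D.erase e) I (E.erase e) c where
  subset := Finset.erase_subset_erase e h.subset
  subset_product := (Finset.erase_subset e E).trans h.subset_product
  root_mem := h.root_mem
  eq_root p hp hpE := h.eq_root p (Finset.mem_of_mem_erase hp) (by grind)

theorem exists_isSaturated_erase (h : IsPendant D I E c) (he : e ∈ E)
    (hE : ∃ S, IsSaturated (E.erase e) S ∧ e.1 ∈ S ∧ e.2 ∉ S) :
    ∃ S, IsSaturated (D.erase e) S ∧ e.1 ∈ S ∧ e.2 ∉ S := by
  obtain ⟨S, hS, h₁, h₂⟩ := hE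
  obtain ⟨S', hS', hiff⟩ := h.erase.exists_isSaturated_extension hS
  obtain ⟨he₁, he₂⟩ := Finset.mem_product.1 (h.subset_product he)
  exact ⟨S', hS', (hiff _ he₁).2 h₁, fun he' => h₂ ((hiff _ he₂).1 he')⟩

end IsPendant

theorem isSaturated_map_iff {W : Type*} (f : V ↪ W) {S : Set W} :
    IsSaturated (D.map (f.prodMap f)) S ↔ IsSaturated D (f ⁻¹' S) := by
  simp only [IsSaturated, Finset.forall_mem_map]
  rfl

end Saturated

section Trees

variable {V : Type*} [LinearOrder V] {I J : Finset V} {D E : Finset (V × V)} {a b c d : V}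

/-- `D` is a crossing-free tree on the points of `I`, placed on a circle in increasing order. In a
tree every chord is a bridge, that is, its endpoints lie in different components once it is
removed. -/
structure IsNoncrossingTree (I : Finset V) (D : Finset (V × V)) : Prop where
  nonempty : I.Nonempty
  subset : D ⊆ I ×ˢ I
  lt : ∀ p ∈ D, p.1 < p.2
  noncrossing : ∀ p ∈ D, ∀ q ∈ D, ¬(p.1 < q.1 ∧ q.1 < p.2 ∧ p.2 < q.2)
  connected : ∀ S, IsSaturated D S → ∀ x ∈ I, ∀ y ∈ I, x ∈ S → y ∈ S
  bridge : ∀ e ∈ D, ∃ S, IsSaturated (D.erase e) S ∧ e.1 ∈ S ∧ e.2 ∉ S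

theorem IsPendant.isNoncrossingTree (h : IsPendant D I E c) (hD : IsNoncrossingTree J D)
    (hIJ : I ⊆ J) : IsNoncrossingTree I E where
  nonempty := ⟨c, h.root_mem⟩
  subset := h.subset_product
  lt p hp := hD.lt p (h.subset hp)
  noncrossing p hp q hq := hD.noncrossing p (h.subset hp) q (h.subset hq)
  connected S hS x hx y hy hxS := by
    obtain ⟨S', hS', hiff⟩ := h.exists_isSaturated_extension hS
    exact (hiff y hy).1 (hD.connected S' hS' x (hIJ hx) y (hIJ hy) ((hiff x hx).2 hxS))
  bridge e he := by
    obtain ⟨S, hS, h₁, h₂⟩ := hD.bridge e (h.subset he)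
    exact ⟨S, fun p hp => hS p (Finset.erase_subset_erase e h.subset hp), h₁, h₂⟩

theorem isNoncrossingTree_union_iff (hdI : d ∈ I) (hdJ : d ∈ J) (hI : ∀ x ∈ I, x ≤ d)
    (hJ : ∀ x ∈ J, d ≤ x) (hD : D ⊆ I ×ˢ I) (hE : E ⊆ J ×ˢ J) :
    IsNoncrossingTree (I ∪ J) (D ∪ E) ↔ IsNoncrossingTree I D ∧ IsNoncrossingTree J E := by
  have hDp : IsPendant (D ∪ E) I D d := ⟨Finset.subset_union_left, hD, hdI, by grind⟩
  have hEp : IsPendant (D ∪ E) J E d := ⟨Finset.subset_union_right, hE, hdJ, by grind⟩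
  refine ⟨fun h => ⟨hDp.isNoncrossingTree h Finset.subset_union_left,
    hEp.isNoncrossingTree h Finset.subset_union_right⟩, fun ⟨h₁, h₂⟩ =>
    ⟨h₁.nonempty.mono Finset.subset_union_left, by grind, ?_, ?_, ?_, ?_⟩⟩
  · exact Finset.forall_mem_union.2 ⟨h₁.lt, h₂.lt⟩
  · have := h₁.noncrossing
    have := h₂.noncrossing
    grind
  · intro S hS
    have h₁S := h₁.connected S fun p hp => hS p (Finset.mem_union_left E hp)
    have h₂S := h₂.connected S fun p hp => hS p (Finset.mem_union_right D hp)
    grind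
  · exact Finset.forall_mem_union.2
      ⟨fun e he => hDp.exists_isSaturated_erase he (h₁.bridge e he),
        fun e he => hEp.exists_isSaturated_erase he (h₂.bridge e he)⟩

theorem isNoncrossingTree_insert_union_iff (hIJ : ∀ x ∈ I, ∀ y ∈ J, x < y) (haI : a ∈ I)
    (ha : ∀ x ∈ I, a ≤ x) (hbJ : b ∈ J) (hb : ∀ x ∈ J, x ≤ b) (hD : D ⊆ I ×ˢ I)
    (hE : E ⊆ J ×ˢ J) :
    IsNoncrossingTree (I ∪ J) (insert (a, b) (D ∪ E)) ↔
      IsNoncrossingTree I D ∧ IsNoncrossingTree J E := by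
  have hDp : IsPendant (insert (a, b) (D ∪ E)) I D a := ⟨by grind, hD, haI, by grind⟩
  have hEp : IsPendant (insert (a, b) (D ∪ E)) J E b := ⟨by grind, hE, hbJ, by grind⟩
  refine ⟨fun h => ⟨hDp.isNoncrossingTree h Finset.subset_union_left,
    hEp.isNoncrossingTree h Finset.subset_union_right⟩, fun ⟨h₁, h₂⟩ =>
    ⟨h₁.nonempty.mono Finset.subset_union_left, by grind, ?_, ?_, ?_, ?_⟩⟩
  · exact (Finset.forall_mem_insert ..).2
      ⟨hIJ a haI b hbJ, Finset.forall_mem_union.2 ⟨h₁.lt, h₂.lt⟩⟩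
  · have := h₁.noncrossing
    have := h₂.noncrossing
    grind
  · intro S hS
    have h₁S := h₁.connected S fun p hp => hS p (by grind)
    have h₂S := h₂.connected S fun p hp => hS p (by grind)
    have hab : a ∈ S ↔ b ∈ S := hS (a, b) (Finset.mem_insert_self _ _)
    grind
  · have hI : IsSaturated ((insert (a, b) (D ∪ E)).erase (a, b)) I := fun p hp => by grind
    have hbI : b ∉ I := fun hbI => (hIJ b hbI b hbJ).false
    exact (Finset.forall_mem_insert ..).2 ⟨⟨I, hI, haI, hbI⟩, Finset.forall_mem_union.2
      ⟨fun e he => hDp.exists_isSaturated_erase he (h₁.bridge e he),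
        fun e he => hEp.exists_isSaturated_erase he (h₂.bridge e he)⟩⟩

namespace IsNoncrossingTree

theorem exists_chord_across (h : IsNoncrossingTree I D) {x y : V} (hx : x ∈ I) (hxc : x < c)
    (hy : y ∈ I) (hcy : c ≤ y) : ∃ p ∈ D, p.1 < c ∧ c ≤ p.2 := by
  by_contra! hcross
  have hsat : IsSaturated D (Set.Iio c) := fun p hp =>
    ⟨hcross p hp, (h.lt p hp).trans⟩
  exact (h.connected _ hsat x hx y hy hxc).not_ge hcy

theorem exists_chord_of_min (h : IsNoncrossingTree I D) (ha : a ∈ I) (hmin : ∀ x ∈ I, a ≤ x)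
    (hI : I.Nontrivial) : ∃ d, (a, d) ∈ D := by
  obtain ⟨y, hy, hya⟩ := hI.exists_ne a
  by_contra! hno
  have hsat : IsSaturated D {a} := fun p hp => by
    have := h.lt p hp
    have := Finset.mem_product.1 (h.subset hp)
    grind
  exact hya (h.connected {a} hsat a ha y hy rfl)

/-- The longest chord at the least point `a` works, because no chord crosses it. -/
theorem exists_chord_forall_le_or_le (h : IsNoncrossingTree I D) (ha : a ∈ I)
    (hmin : ∀ x ∈ I, a ≤ x) (hI : I.Nontrivial) :
    ∃ d, (a, d) ∈ D ∧ ∀ p ∈ D, p.2 ≤ d ∨ d ≤ p.1 := by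
  obtain ⟨d₀, hd₀⟩ := h.exists_chord_of_min ha hmin hI
  obtain ⟨⟨a', d⟩, hd, hmax⟩ := (D.filter fun p => p.1 = a).exists_max_image Prod.snd
    ⟨_, Finset.mem_filter.2 ⟨hd₀, rfl⟩⟩
  obtain ⟨had, rfl⟩ := Finset.mem_filter.1 hd
  refine ⟨d, had, fun p hp => ?_⟩
  have := h.noncrossing _ had p hp
  have := Finset.mem_product.1 (h.subset hp)
  grind

/-- If the chord joining the two extreme points is a bridge between the component `S` of `a` and
the rest, then the last point `k` of `S` works: a second chord over the gap after `k` would enclose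
a part of `S`, and would thereby disconnect it from `a`. -/
theorem exists_uncovered_gap (h : IsNoncrossingTree I D) (hab : (a, b) ∈ D)
    (ha : ∀ x ∈ I, a ≤ x) (hb : ∀ x ∈ I, x ≤ b) :
    ∃ k, k < b ∧ ∀ p ∈ D, p ≠ (a, b) → p.2 ≤ k ∨ k < p.1 := by
  classical
  obtain ⟨S, hS, haS, hbS⟩ := h.bridge _ hab
  have haI : a ∈ I := (Finset.mem_product.1 (h.subset hab)).1
  obtain ⟨k, hk, hmax⟩ := (I.filter (· ∈ S)).exists_max_image id
    ⟨a, Finset.mem_filter.2 ⟨haI, haS⟩⟩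
  obtain ⟨hkI, hkS⟩ := Finset.mem_filter.1 hk
  have hkb : k < b := (hb k hkI).lt_of_ne fun hkb => hbS (hkb ▸ hkS)
  refine ⟨k, hkb, fun p hp hpne => ?_⟩
  by_contra! hcover
  obtain ⟨hp₁, hp₂⟩ := Finset.mem_product.1 (h.subset hp)
  have hp₂S : p.2 ∉ S := fun hpS =>
    (hmax p.2 (Finset.mem_filter.2 ⟨hp₂, hpS⟩)).not_gt hcover.1
  have hp₁S : p.1 ∉ S := fun hpS => hp₂S ((hS p (Finset.mem_erase.2 ⟨hpne, hp⟩)).1 hpS)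
  have hsat : IsSaturated D (S ∩ Set.Ioo p.1 p.2) := fun q hq => by
    have := h.lt q hq
    have := h.noncrossing p hp q hq
    have := h.noncrossing q hq p hp
    have := Finset.mem_product.1 (h.subset hp)
    have := hS q
    grind
  have hk : k ∈ S ∩ Set.Ioo p.1 p.2 := by grind
  exact (h.connected _ hsat k hkI a haI hk).2.1.not_ge (ha p.1 hp₁)

end IsNoncrossingTree

theorem isNoncrossingTree_map_iff {W : Type*} [LinearOrder W] (f : V ↪o W) :
    IsNoncrossingTree (I.map f.toEmbedding) (D.map (f.toEmbedding.prodMap f.toEmbedding)) ↔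
      IsNoncrossingTree I D := by
  set g := f.toEmbedding.prodMap f.toEmbedding
  have hpre : Function.Surjective fun S : Set W => f ⁻¹' S := f.injective.preimage_surjective
  have hsub : D.map g ⊆ I.map f.toEmbedding ×ˢ I.map f.toEmbedding ↔ D ⊆ I ×ˢ I := by
    rw [← Finset.prodMap_map_product, Finset.map_subset_map]
  have hlt : (∀ p ∈ D.map g, p.1 < p.2) ↔ ∀ p ∈ D, p.1 < p.2 := by
    simp [Finset.forall_mem_map, g, -Finset.mem_map]
  have hcross : (∀ p ∈ D.map g, ∀ q ∈ D.map g, ¬(p.1 < q.1 ∧ q.1 < p.2 ∧ p.2 < q.2)) ↔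
      ∀ p ∈ D, ∀ q ∈ D, ¬(p.1 < q.1 ∧ q.1 < p.2 ∧ p.2 < q.2) := by
    simp [Finset.forall_mem_map, g, -Finset.mem_map]
  have hconn : (∀ S, IsSaturated (D.map g) S →
      ∀ x ∈ I.map f.toEmbedding, ∀ y ∈ I.map f.toEmbedding, x ∈ S → y ∈ S) ↔
      ∀ S, IsSaturated D S → ∀ x ∈ I, ∀ y ∈ I, x ∈ S → y ∈ S := by
    simp only [hpre.forall, Finset.forall_mem_map, g, isSaturated_map_iff]
    rfl
  have hbridge : (∀ e ∈ D.map g, ∃ S, IsSaturated ((D.map g).erase e) S ∧ e.1 ∈ S ∧ e.2 ∉ S) ↔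
      ∀ e ∈ D, ∃ S, IsSaturated (D.erase e) S ∧ e.1 ∈ S ∧ e.2 ∉ S := by
    simp only [hpre.exists, Finset.forall_mem_map, ← Finset.map_erase, g, isSaturated_map_iff]
    rfl
  constructor
  · rintro ⟨h₁, h₂, h₃, h₄, h₅, h₆⟩
    exact ⟨Finset.map_nonempty.1 h₁, hsub.1 h₂, hlt.1 h₃, hcross.1 h₄, hconn.1 h₅, hbridge.1 h₆⟩
  · rintro ⟨h₁, h₂, h₃, h₄, h₅, h₆⟩
    exact ⟨h₁.map, hsub.2 h₂, hlt.2 h₃, hcross.2 h₄, hconn.2 h₅, hbridge.2 h₆⟩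

end Trees

section Counting

variable {V W : Type*} [LinearOrder V] [LinearOrder W]

open Classical in
/-- The set of crossing-free trees on the points of `I`. -/
noncomputable def noncrossingTrees (I : Finset V) : Finset (Finset (V × V)) :=
  (I ×ˢ I).powerset.filter (IsNoncrossingTree I)

theorem mem_noncrossingTrees {I : Finset V} {D : Finset (V × V)} :
    D ∈ noncrossingTrees I ↔ IsNoncrossingTree I D := by
  simp only [noncrossingTrees, Finset.mem_filter, Finset.mem_powerset, and_iff_right_iff_imp]
  exact IsNoncrossingTree.subset

theorem card_noncrossingTrees_map (f : V ↪o W) (I : Finset V) :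
    (noncrossingTrees (I.map f.toEmbedding)).card = (noncrossingTrees I).card := by
  let g : V × V ↪ W × W := f.toEmbedding.prodMap f.toEmbedding
  have hmap : noncrossingTrees (I.map f.toEmbedding) =
      (noncrossingTrees I).map (Finset.mapEmbedding g).toEmbedding := by
    ext D
    simp only [Finset.mem_map, mem_noncrossingTrees]
    constructor
    · intro h
      have hsub : D ⊆ (I ×ˢ I).map g := by
        simpa only [g, ← Finset.prodMap_map_product] using h.subset
      obtain ⟨E, -, rfl⟩ := Finset.subset_map_iff.1 hsub
      exact ⟨E, (isNoncrossingTree_map_iff f).1 h, rfl⟩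
    · rintro ⟨E, hE, rfl⟩
      exact (isNoncrossingTree_map_iff f).2 hE
  rw [hmap, Finset.card_map]

/-- The number of crossing-free trees on `n` points. -/
noncomputable def treeCount (n : ℕ) : ℕ :=
  (noncrossingTrees (Finset.univ : Finset (Fin n))).card

theorem card_noncrossingTrees (I : Finset V) :
    (noncrossingTrees I).card = treeCount I.card := by
  rw [treeCount, ← card_noncrossingTrees_map (I.orderEmbOfFin rfl)]
  exact congrArg (fun J => (noncrossingTrees J).card) (I.map_orderEmbOfFin_univ rfl).symm

theorem treeCount_zero : treeCount 0 = 0 := by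
  rw [treeCount, Finset.card_eq_zero, Finset.eq_empty_iff_forall_notMem]
  intro D hD
  exact (mem_noncrossingTrees.1 hD).nonempty.ne_empty Finset.univ_eq_empty

theorem treeCount_one : treeCount 1 = 1 := by
  rw [treeCount, Finset.card_eq_one]
  refine ⟨∅, Finset.ext fun D => ?_⟩
  rw [mem_noncrossingTrees, Finset.mem_singleton]
  constructor
  · refine fun h => Finset.eq_empty_of_forall_notMem fun p hp => ?_
    exact (h.lt p hp).ne (Subsingleton.elim _ _)
  · rintro rfl
    refine ⟨Finset.univ_nonempty, by simp, by simp, by simp, fun S _ x _ y _ hx => ?_, by simp⟩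
    rwa [Subsingleton.elim y x]

/-- The butterflies with `m` vertices, encoded as the crossing-free trees on `0, …, m` that contain
the chord `(0, m)`: deleting this chord and identifying its endpoints leaves two trees with a
common root. -/
noncomputable def butterflies (m : ℕ) : Finset (Finset (ℕ × ℕ)) :=
  (noncrossingTrees (Finset.range (m + 1))).filter ((0, m) ∈ ·)

theorem mem_butterflies {m : ℕ} {D : Finset (ℕ × ℕ)} :
    D ∈ butterflies m ↔ IsNoncrossingTree (Finset.range (m + 1)) D ∧ (0, m) ∈ D := by
  rw [butterflies, Finset.mem_filter, mem_noncrossingTrees]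

theorem butterflies_zero : butterflies 0 = ∅ := by
  refine Finset.eq_empty_of_forall_notMem fun D hD => ?_
  obtain ⟨hD, h₀⟩ := mem_butterflies.1 hD
  exact (hD.lt _ h₀).false

section Butterfly

variable {m i i' : ℕ} {D D' E E' : Finset (ℕ × ℕ)}

theorem pos_and_le_of_isNoncrossingTree (hD : IsNoncrossingTree (Finset.range i) D)
    (hE : IsNoncrossingTree (Finset.Ico i (m + 1)) E) : 0 < i ∧ i ≤ m := by
  have hi : i ≠ 0 := Finset.nonempty_range_iff.1 hD.nonempty
  have him : i < m + 1 := Finset.nonempty_Ico.1 hE.nonempty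
  omega

theorem isNoncrossingTree_butterfly_iff (hi : 0 < i) (him : i ≤ m)
    (hD : D ⊆ Finset.range i ×ˢ Finset.range i)
    (hE : E ⊆ Finset.Ico i (m + 1) ×ˢ Finset.Ico i (m + 1)) :
    IsNoncrossingTree (Finset.range (m + 1)) (insert (0, m) (D ∪ E)) ↔
      IsNoncrossingTree (Finset.range i) D ∧ IsNoncrossingTree (Finset.Ico i (m + 1)) E := by
  have hunion : Finset.range (m + 1) = Finset.range i ∪ Finset.Ico i (m + 1) := by
    grind
  rw [hunion]
  exact isNoncrossingTree_insert_union_iff (by grind) (by grind) (by grind) (by grind) (by grind)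
    hD hE

theorem exists_butterfly_eq (hD : D ∈ butterflies m) :
    ∃ i E F, IsNoncrossingTree (Finset.range i) E ∧
      IsNoncrossingTree (Finset.Ico i (m + 1)) F ∧ insert (0, m) (E ∪ F) = D := by
  obtain ⟨hD, hm⟩ := mem_butterflies.1 hD
  obtain ⟨k, hkm, hgap⟩ := hD.exists_uncovered_gap hm (by simp) (by grind)
  have hsub := hD.subset
  have hlt := hD.lt
  have hglue : insert (0, m) (D.filter (fun p => p.2 ≤ k) ∪ D.filter fun p => k < p.1) = D := by
    grind
  refine ⟨k + 1, D.filter fun p => p.2 ≤ k, D.filter fun p => k < p.1, ?_⟩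
  rw [← and_assoc, ← isNoncrossingTree_butterfly_iff k.succ_pos hkm (by grind) (by grind), hglue]
  exact ⟨hD, rfl⟩

theorem le_of_butterfly_eq (hD : IsNoncrossingTree (Finset.range i) D)
    (hE : IsNoncrossingTree (Finset.Ico i (m + 1)) E)
    (hD' : IsNoncrossingTree (Finset.range i') D')
    (hE' : IsNoncrossingTree (Finset.Ico i' (m + 1)) E')
    (h : insert (0, m) (D ∪ E) = insert (0, m) (D' ∪ E')) : i' ≤ i := by
  by_contra! hii'
  obtain ⟨hi, -⟩ := pos_and_le_of_isNoncrossingTree hD hE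
  obtain ⟨hi', him'⟩ := pos_and_le_of_isNoncrossingTree hD' hE'
  obtain ⟨p, hp, hpi⟩ := hD'.exists_chord_across (c := i) (x := 0) (y := i) (by simpa) hi
    (by simpa) le_rfl
  have := hD'.subset hp
  have hpD : p ∈ insert (0, m) (D ∪ E) := by grind
  have := hD.subset
  have := hE.subset
  grind

theorem butterfly_inj (hD : IsNoncrossingTree (Finset.range i) D)
    (hE : IsNoncrossingTree (Finset.Ico i (m + 1)) E)
    (hD' : IsNoncrossingTree (Finset.range i') D')
    (hE' : IsNoncrossingTree (Finset.Ico i' (m + 1)) E')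
    (h : insert (0, m) (D ∪ E) = insert (0, m) (D' ∪ E')) : i = i' ∧ D = D' ∧ E = E' := by
  obtain rfl : i = i' := (le_of_butterfly_eq hD' hE' hD hE h.symm).antisymm
    (le_of_butterfly_eq hD hE hD' hE' h)
  obtain ⟨hi, him⟩ := pos_and_le_of_isNoncrossingTree hD hE
  have := hD.subset
  have := hE.subset
  have := hD'.subset
  have := hE'.subset
  refine ⟨rfl, ?_, ?_⟩
  · ext p
    have := Finset.ext_iff.1 h p
    grind
  · ext p
    have := Finset.ext_iff.1 h p
    grind

theorem card_butterflies (m : ℕ) :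
    (butterflies m).card = ∑ i ∈ Finset.range (m + 1 + 1), treeCount i * treeCount (m + 1 - i) := by
  let pairs := (Finset.range (m + 1 + 1)).sigma fun i =>
    noncrossingTrees (Finset.range i) ×ˢ noncrossingTrees (Finset.Ico i (m + 1))
  have hcard : pairs.card = (butterflies m).card := by
    refine Finset.card_bij (fun x _ => insert (0, m) (x.2.1 ∪ x.2.2)) ?_ ?_ ?_
    · rintro ⟨i, D, E⟩ hx
      simp only [pairs, Finset.mem_sigma, Finset.mem_product, mem_noncrossingTrees] at hx
      obtain ⟨-, hD, hE⟩ := hx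
      obtain ⟨hi, him⟩ := pos_and_le_of_isNoncrossingTree hD hE
      exact mem_butterflies.2 ⟨(isNoncrossingTree_butterfly_iff hi him hD.subset hE.subset).2
        ⟨hD, hE⟩, Finset.mem_insert_self _ _⟩
    · rintro ⟨i, D, E⟩ hx ⟨i', D', E'⟩ hx' h
      simp only [pairs, Finset.mem_sigma, Finset.mem_product, mem_noncrossingTrees] at hx hx'
      obtain ⟨rfl, rfl, rfl⟩ := butterfly_inj hx.2.1 hx.2.2 hx'.2.1 hx'.2.2 h
      rfl
    · intro D hD
      obtain ⟨i, E, F, hE, hF, rfl⟩ := exists_butterfly_eq hD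
      obtain ⟨-, him⟩ := pos_and_le_of_isNoncrossingTree hE hF
      refine ⟨⟨i, E, F⟩, ?_, rfl⟩
      simp only [pairs, Finset.mem_sigma, Finset.mem_product, mem_noncrossingTrees]
      exact ⟨Finset.mem_range.2 (by omega), hE, hF⟩
  simp [← hcard, pairs, card_noncrossingTrees]

end Butterfly

section Attach

variable {m m' n : ℕ} {D D' E E' : Finset (ℕ × ℕ)}

theorem isNoncrossingTree_attach_iff (hmn : m < n)
    (hD : D ⊆ Finset.range (m + 1) ×ˢ Finset.range (m + 1))
    (hE : E ⊆ Finset.Ico m n ×ˢ Finset.Ico m n) :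
    IsNoncrossingTree (Finset.range n) (D ∪ E) ↔
      IsNoncrossingTree (Finset.range (m + 1)) D ∧ IsNoncrossingTree (Finset.Ico m n) E := by
  have hunion : Finset.range n = Finset.range (m + 1) ∪ Finset.Ico m n := by grind
  rw [hunion]
  exact isNoncrossingTree_union_iff (d := m) (by grind) (by grind) (by grind) (by grind) hD hE

theorem exists_attach_eq (hn : 2 ≤ n) (hD : IsNoncrossingTree (Finset.range n) D) :
    ∃ m E F, E ∈ butterflies m ∧ IsNoncrossingTree (Finset.Ico m n) F ∧ E ∪ F = D := by
  have hnontrivial : (Finset.range n).Nontrivial := ⟨0, by grind, 1, by grind⟩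
  obtain ⟨m, hm, hside⟩ :=
    hD.exists_chord_forall_le_or_le (a := 0) (by grind) (by grind) hnontrivial
  have hsub := hD.subset
  have hlt := hD.lt
  have hglue : (D.filter fun p => p.2 ≤ m) ∪ (D.filter fun p => m ≤ p.1) = D := by grind
  have hsplit := isNoncrossingTree_attach_iff (m := m) (n := n)
    (D := D.filter fun p => p.2 ≤ m) (E := D.filter fun p => m ≤ p.1)
    (by grind) (by grind) (by grind)
  rw [hglue] at hsplit
  obtain ⟨hE, hF⟩ := hsplit.1 hD
  exact ⟨m, _, _, mem_butterflies.2 ⟨hE, by grind⟩, hF, hglue⟩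

theorem attach_inj (hD : D ∈ butterflies m) (hE : IsNoncrossingTree (Finset.Ico m n) E)
    (hD' : D' ∈ butterflies m') (hE' : IsNoncrossingTree (Finset.Ico m' n) E')
    (h : D ∪ E = D' ∪ E') : m = m' ∧ D = D' ∧ E = E' := by
  rw [mem_butterflies] at hD hD'
  have := hD.1.subset
  have := hE.subset
  have := hD'.1.subset
  have := hE'.subset
  have := hD.1.lt
  have := hE.lt
  have := hD'.1.lt
  have := hE'.lt
  obtain rfl : m = m' := by
    have := Finset.ext_iff.1 h (0, m)
    have := Finset.ext_iff.1 h (0, m')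
    grind
  refine ⟨rfl, ?_, ?_⟩
  · ext p
    have := Finset.ext_iff.1 h p
    grind
  · ext p
    have := Finset.ext_iff.1 h p
    grind

theorem treeCount_eq_sum_butterflies (hn : 2 ≤ n) :
    treeCount n = ∑ m ∈ Finset.range (n + 1), (butterflies m).card * treeCount (n - m) := by
  let pairs := (Finset.range (n + 1)).sigma fun m =>
    butterflies m ×ˢ noncrossingTrees (Finset.Ico m n)
  have hcard : pairs.card = (noncrossingTrees (Finset.range n)).card := by
    refine Finset.card_bij (fun x _ => x.2.1 ∪ x.2.2) ?_ ?_ ?_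
    · rintro ⟨m, D, E⟩ hx
      simp only [pairs, Finset.mem_sigma, Finset.mem_product, mem_noncrossingTrees] at hx
      obtain ⟨-, hD, hE⟩ := hx
      have hmn : m < n := Finset.nonempty_Ico.1 hE.nonempty
      have hD := (mem_butterflies.1 hD).1
      exact mem_noncrossingTrees.2
        ((isNoncrossingTree_attach_iff hmn hD.subset hE.subset).2 ⟨hD, hE⟩)
    · rintro ⟨m, D, E⟩ hx ⟨m', D', E'⟩ hx' h
      simp only [pairs, Finset.mem_sigma, Finset.mem_product, mem_noncrossingTrees] at hx hx'
      obtain ⟨rfl, rfl, rfl⟩ := attach_inj hx.2.1 hx.2.2 hx'.2.1 hx'.2.2 h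
      rfl
    · intro D hD
      obtain ⟨m, E, F, hE, hF, rfl⟩ := exists_attach_eq hn (mem_noncrossingTrees.1 hD)
      have hmn : m < n := Finset.nonempty_Ico.1 hF.nonempty
      refine ⟨⟨m, E, F⟩, ?_, rfl⟩
      simp only [pairs, Finset.mem_sigma, Finset.mem_product, mem_noncrossingTrees]
      exact ⟨Finset.mem_range.2 (by omega), hE, hF⟩
  rw [card_noncrossingTrees, Finset.card_range] at hcard
  simp [← hcard, pairs, card_noncrossingTrees]

end Attach

end Counting

section ChordDiagrams

variable {n : ℕ} {D : Finset (Fin n × Fin n)}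

theorem crossNum_eq_zero_iff : crossNum D = 0 ↔ ∀ p ∈ D, ∀ q ∈ D, ¬Interleaves p q := by
  simp only [crossNum, Finset.card_eq_zero, Finset.filter_eq_empty_iff, Finset.mem_product]
  exact ⟨fun h p hp q hq => h (x := (p, q)) ⟨hp, hq⟩, fun h x hx => h x.1 hx.1 x.2 hx.2⟩

theorem isSaturated_iff_forall_adj {S : Set (Fin n)} :
    IsSaturated D S ↔ ∀ u v, (diagGraph D).Adj u v → (u ∈ S ↔ v ∈ S) := by
  simp only [diagGraph, SimpleGraph.fromRel_adj]
  constructor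
  · rintro hS u v ⟨-, huv | hvu⟩
    · exact hS _ huv
    · exact (hS _ hvu).symm
  · intro hS p hp
    by_cases hne : p.1 = p.2
    · rw [hne]
    · exact hS p.1 p.2 ⟨hne, Or.inl hp⟩

theorem reachable_diagGraph_iff {x y : Fin n} :
    (diagGraph D).Reachable x y ↔ ∀ S, IsSaturated D S → x ∈ S → y ∈ S := by
  simp only [isSaturated_iff_forall_adj]
  constructor
  · rintro ⟨w⟩ S hS hx
    induction w with
    | nil => exact hx
    | cons hadj _ ih => exact ih ((hS _ _ hadj).1 hx)
  · intro h
    refine h {z | (diagGraph D).Reachable x z} (fun u v huv => ?_) (SimpleGraph.Reachable.refl x)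
    exact ⟨fun hu => hu.trans huv.reachable, fun hv => hv.trans huv.symm.reachable⟩

theorem diagGraph_adj_iff (hD : IsDiagram D) {u v : Fin n} :
    (diagGraph D).Adj u v ↔ (u, v) ∈ D ∨ (v, u) ∈ D := by
  rw [diagGraph, SimpleGraph.fromRel_adj, and_iff_right_iff_imp]
  rintro (h | h)
  · exact (hD _ h).ne
  · exact (hD _ h).ne'

theorem diagGraph_erase (hD : IsDiagram D) {e : Fin n × Fin n} (he : e ∈ D) :
    diagGraph (D.erase e) = (diagGraph D).deleteEdges {s(e.1, e.2)} := by
  ext u v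
  have huv := hD (u, v)
  have hvu := hD (v, u)
  have he := hD e he
  obtain ⟨e₁, e₂⟩ := e
  simp only [diagGraph, SimpleGraph.deleteEdges_adj, SimpleGraph.fromRel_adj, Finset.mem_erase,
    Set.mem_singleton_iff, Sym2.eq_iff, ne_eq, Prod.mk.injEq]
  grind

theorem connected_diagGraph_iff :
    (diagGraph D).Connected ↔
      (Finset.univ : Finset (Fin n)).Nonempty ∧ ∀ S, IsSaturated D S → ∀ x y, x ∈ S → y ∈ S := by
  simp only [SimpleGraph.connected_iff, SimpleGraph.Preconnected, reachable_diagGraph_iff,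
    Finset.univ_nonempty_iff]
  grind

theorem isAcyclic_diagGraph_iff (hD : IsDiagram D) :
    (diagGraph D).IsAcyclic ↔ ∀ e ∈ D, ∃ S, IsSaturated (D.erase e) S ∧ e.1 ∈ S ∧ e.2 ∉ S := by
  have hbridge : ∀ e ∈ D, (diagGraph D).IsBridge s(e.1, e.2) ↔
      ∃ S, IsSaturated (D.erase e) S ∧ e.1 ∈ S ∧ e.2 ∉ S := fun e he => by
    rw [SimpleGraph.isBridge_iff, ← diagGraph_erase hD he, reachable_diagGraph_iff]
    grind
  rw [SimpleGraph.isAcyclic_iff_forall_adj_isBridge]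
  simp only [diagGraph_adj_iff hD, ← forall₂_congr hbridge]
  constructor
  · exact fun h e he => h (Or.inl he)
  · rintro h u v (huv | hvu)
    · exact h _ huv
    · rw [Sym2.eq_swap]
      exact h _ hvu

theorem isNoncrossingTree_univ_iff :
    IsNoncrossingTree Finset.univ D ↔
      IsDiagram D ∧ crossNum D = 0 ∧ (diagGraph D).IsTree := by
  rw [SimpleGraph.isTree_iff, connected_diagGraph_iff, crossNum_eq_zero_iff]
  constructor
  · rintro ⟨hne, -, hlt, hcross, hconn, hbridge⟩
    exact ⟨hlt, hcross, ⟨hne, by simpa using hconn⟩, (isAcyclic_diagGraph_iff hlt).2 hbridge⟩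
  · rintro ⟨hlt, hcross, ⟨hne, hconn⟩, hacyclic⟩
    exact ⟨hne, by simp, hlt, hcross, by simpa using hconn,
      (isAcyclic_diagGraph_iff hlt).1 hacyclic⟩

end ChordDiagrams

section GeneratingFunctions

theorem coeff_treeGF0 (n : ℕ) : coeff n treeGF0 = treeCount n := by
  rw [treeGF0, coeff_mk, treeCount, Nat.cast_inj, ← Nat.card_eq_finsetCard]
  exact Nat.card_congr (Equiv.subtypeEquivRight fun D =>
    (mem_noncrossingTrees.trans isNoncrossingTree_univ_iff).symm)

/-- The generating function of butterflies by number of vertices. -/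
noncomputable def butterflyGF : PowerSeries ℚ :=
  PowerSeries.mk fun m => ((butterflies m).card : ℚ)

theorem X_mul_butterflyGF : X * butterflyGF = treeGF0 ^ 2 := by
  ext n
  rw [sq, coeff_mul n treeGF0]
  simp only [coeff_treeGF0]
  cases n with
  | zero => simp [treeCount_zero]
  | succ m =>
    rw [Finset.Nat.sum_antidiagonal_eq_sum_range_succ fun i j => (treeCount i * treeCount j : ℚ),
      coeff_succ_X_mul, butterflyGF, coeff_mk, card_butterflies]
    push_cast
    rfl

theorem treeGF0_eq_X_add : treeGF0 = X + butterflyGF * treeGF0 := by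
  ext n
  rw [map_add, coeff_mul]
  simp only [coeff_treeGF0, butterflyGF, coeff_mk]
  rw [Finset.Nat.sum_antidiagonal_eq_sum_range_succ
    fun i j => ((butterflies i).card * treeCount j : ℚ), coeff_X]
  obtain rfl | rfl | hn : n = 0 ∨ n = 1 ∨ 2 ≤ n := by omega
  · simp [treeCount_zero]
  · simp [Finset.sum_range_succ, treeCount_zero, treeCount_one, butterflies_zero]
  · rw [if_neg (by omega), zero_add, treeCount_eq_sum_butterflies hn]
    push_cast
    rfl

end GeneratingFunctions

/-- The generating function `T₀(x)` of crossing-free trees satisfies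
`T₀³ − x·T₀ + x² = 0`. Moreover, if `B(x)` is the generating function of
butterflies — i.e. the series determined by the decomposition
`B(x) = T₀(x)²/x` of a butterfly into an ordered pair of crossing-free trees
with a common root counted once — then `T₀(x) = x/(1 − B(x))`. -/
theorem treeGF0_algebraic_equation :
    treeGF0 ^ 3 - (X : PowerSeries ℚ) * treeGF0 + X ^ 2 = 0 ∧
    ∀ B : PowerSeries ℚ, X * B = treeGF0 ^ 2 → treeGF0 * (1 - B) = X := by
  refine ⟨?_, fun B hB => ?_⟩
  · linear_combination (-X) * treeGF0_eq_X_add - treeGF0 * X_mul_butterflyGF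
  · obtain rfl : B = butterflyGF :=
      mul_left_cancel₀ X_ne_zero (hB.trans X_mul_butterflyGF.symm)
    linear_combination treeGF0_eq_X_add
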